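/- For every τ in the genus-2 Siegel upper half space H₂, the fourth powers of the ten even theta constants satisfy: θ⁴[δ₁] = P₀+P₁+P₂+P₃, θ⁴[δ₂] = P₀−P₁+P₂−P₃, θ⁴[δ₃] = P₀+P₁−P₂−P₃, θ⁴[δ₄] = P₀−P₁−P₂+P₃, θ⁴[δ₅] = 2P₁+2P₄, θ⁴[δ₆] = 2P₁−2P₄, θ⁴[δ₇] = 2P₂+2P₄, θ⁴[δ₈] = 2P₂−2P₄, θ⁴[δ₉] = 2P₃+2P₄, θ⁴[δ₁₀] = 2P₃−2P₄ (all evaluated at τ). -/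

import Mathlib

open scoped BigOperators

namespace TwoLoop

/-- 2×2 complex matrices. -/
abbrev Mat2 := Matrix (Fin 2) (Fin 2) ℂ

/-- The genus-2 Siegel upper half space: symmetric 2×2 complex matrices with
positive definite imaginary part. -/
def SiegelH2 : Set Mat2 := {τ | τ.transpose = τ ∧ (τ.map Complex.im).PosDef}

/-- A (half-integer) theta characteristic `[a;b]`, recorded by its rows `a, b ∈ {0,1}²`. -/
abbrev Char := (Fin 2 → ℤ) × (Fin 2 → ℤ)

/-- The theta constant `θ[a;b](τ) = Σ_{n ∈ ℤ²} exp(πi (n+a/2)ᵀ τ (n+a/2) + πi (n+a/2)·b)`. -/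
noncomputable def theta (κ : Char) (τ : Mat2) : ℂ :=
  ∑' n : Fin 2 → ℤ,
    Complex.exp ((Real.pi : ℂ) * Complex.I *
      ((∑ i, ∑ j, ((n i : ℂ) + (κ.1 i : ℂ) / 2) * τ i j * ((n j : ℂ) + (κ.1 j : ℂ) / 2))
        + ∑ i, ((n i : ℂ) + (κ.1 i : ℂ) / 2) * (κ.2 i : ℂ)))

/-- The ten even characteristics δ₁,…,δ₁₀. -/
def δev : Fin 10 → Char :=
  ![(![0,0], ![0,0]), (![0,0], ![0,1]), (![0,0], ![1,0]), (![0,0], ![1,1]),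
    (![0,1], ![0,0]), (![0,1], ![1,0]), (![1,0], ![0,0]), (![1,0], ![0,1]),
    (![1,1], ![0,0]), (![1,1], ![1,1])]

/-- The six odd characteristics ν₁,…,ν₆. -/
def νodd : Fin 6 → Char :=
  ![(![0,1], ![0,1]), (![1,0], ![1,0]), (![0,1], ![1,1]),
    (![1,0], ![1,1]), (![1,1], ![0,1]), (![1,1], ![1,0])]

/-- `Θ[ε](τ) = θ[ε;0](2τ)`. -/
noncomputable def Θf (ε : Fin 2 → ℤ) (τ : Mat2) : ℂ := theta (ε, ![0,0]) ((2 : ℂ) • τ)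

noncomputable def P0 (τ : Mat2) : ℂ :=
  Θf ![0,0] τ ^ 4 + Θf ![0,1] τ ^ 4 + Θf ![1,0] τ ^ 4 + Θf ![1,1] τ ^ 4
noncomputable def P1 (τ : Mat2) : ℂ :=
  2 * (Θf ![0,0] τ ^ 2 * Θf ![0,1] τ ^ 2 + Θf ![1,0] τ ^ 2 * Θf ![1,1] τ ^ 2)
noncomputable def P2 (τ : Mat2) : ℂ :=
  2 * (Θf ![0,0] τ ^ 2 * Θf ![1,0] τ ^ 2 + Θf ![0,1] τ ^ 2 * Θf ![1,1] τ ^ 2)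
noncomputable def P3 (τ : Mat2) : ℂ :=
  2 * (Θf ![0,0] τ ^ 2 * Θf ![1,1] τ ^ 2 + Θf ![0,1] τ ^ 2 * Θf ![1,0] τ ^ 2)
noncomputable def P4 (τ : Mat2) : ℂ :=
  4 * (Θf ![0,0] τ * Θf ![0,1] τ * Θf ![1,0] τ * Θf ![1,1] τ)

/-- The vector `(P₀,…,P₄)`. -/
noncomputable def Pv : Fin 5 → Mat2 → ℂ := ![P0, P1, P2, P3, P4]

open MvPolynomial in
/-- The Igusa quartic as a polynomial in `x₀,…,x₄`. -/
noncomputable def I4poly : MvPolynomial (Fin 5) ℂ :=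
  X 4 ^ 4 + X 4 ^ 2 * X 0 ^ 2 - X 4 ^ 2 * X 1 ^ 2 - X 4 ^ 2 * X 2 ^ 2 - X 4 ^ 2 * X 3 ^ 2
    + X 1 ^ 2 * X 2 ^ 2 + X 1 ^ 2 * X 3 ^ 2 + X 2 ^ 2 * X 3 ^ 2
    - 2 * (X 0 * X 1 * X 2 * X 3)

/-- The signature `⟨κ|λ⟩ = exp(πi(a_κ·b_λ − b_κ·a_λ))`. -/
noncomputable def sig (κ lam : Char) : ℂ :=
  Complex.exp ((Real.pi : ℂ) * Complex.I *
    (((∑ i, κ.1 i * lam.2 i : ℤ) : ℂ) - ((∑ i, κ.2 i * lam.1 i : ℤ) : ℂ)))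

/-- Componentwise mod-2 sum of characteristics. -/
def addChar (κ lam : Char) : Char :=
  (fun i => (κ.1 i + lam.1 i) % 2, fun i => (κ.2 i + lam.2 i) % 2)

/-- For each even characteristic `δ_d`, the ordering `(k₁,…,k₆)` of `{1,…,6}` (0-indexed) whose
first three entries form the triad of odd characteristics with `δ_d = ν_{k₁}+ν_{k₂}+ν_{k₃}`
and whose last three are the complementary indices. -/
def triad : Fin 10 → Fin 6 → Fin 6 :=
  ![![0,3,5,1,2,4], ![0,1,5,2,3,4], ![0,1,4,2,3,5], ![0,3,4,1,2,5], ![0,1,3,2,4,5],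
    ![0,4,5,1,2,3], ![0,1,2,3,4,5], ![0,2,3,1,4,5], ![0,2,5,1,3,4], ![0,2,4,1,3,5]]

/-- D'Hoker–Phong's `Ξ₆[δ]`. -/
noncomputable def Xi6 (d : Fin 10) (τ : Mat2) : ℂ :=
  ∑ i : Fin 3, ∑ j : Fin 3,
    if i < j then
      sig (νodd (triad d (Fin.castLE (by norm_num) i))) (νodd (triad d (Fin.castLE (by norm_num) j))) *
        ∏ m : Fin 3,
          theta (addChar (addChar (νodd (triad d (Fin.castLE (by norm_num) i)))
              (νodd (triad d (Fin.castLE (by norm_num) j))))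
            (νodd (triad d (⟨m.1 + 3, by omega⟩ : Fin 6)))) τ ^ 4
    else 0

/-- The formal derivative `∂I₄/∂θ⁴[δ]` of the Igusa quartic with respect to the ten fourth
powers of the even theta constants, regarded as independent variables. -/
noncomputable def Dd (d : Fin 10) (τ : Mat2) : ℂ :=
  (1 / 48 : ℂ) *
    (theta (δev d) τ ^ 4 * (∑ d' : Fin 10, theta (δev d') τ ^ 8) - 4 * theta (δev d) τ ^ 12)

/-- `f_δ = 2Ξ₆[δ] − ∂I₄/∂θ⁴[δ]`. -/
noncomputable def fδ (d : Fin 10) (τ : Mat2) : ℂ := 2 * Xi6 d τ - Dd d τ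

/-- `Ψ₆`, the weight-6 modular form. -/
noncomputable def Ψ6 (τ : Mat2) : ℂ :=
  P0 τ ^ 3 - 9 * P0 τ * (P1 τ ^ 2 + P2 τ ^ 2 + P3 τ ^ 2 - 4 * P4 τ ^ 2)
    + 54 * (P1 τ * P2 τ * P3 τ)

/-- `Ψ₁₀`, the weight-10 modular form. -/
noncomputable def Ψ10 (τ : Mat2) : ℂ := ∏ d : Fin 10, theta (δev d) τ ^ 2

/-- A characteristic is even when `a·b` is even. -/
def IsEvenChar (κ : Char) : Prop := (∑ i, κ.1 i * κ.2 i) % 2 = 0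

/-- A characteristic is odd when `a·b` is odd. -/
def IsOddChar (κ : Char) : Prop := (∑ i, κ.1 i * κ.2 i) % 2 = 1

/-!
The squares of the theta constants are quadratic in the second-order theta constants. In the double
series for a product of two theta constants at `τ`, every pair of indices is `(p + q + ε, p - q)`
for a unique `ε ∈ {0,1}^g`, and by the parallelogram law for the quadratic form `τ` the summand
splits into a product of summands at `2τ` indexed by `p` and `q`. In genus 2 this writes each
`θ²[δ]` as a signed sum of four products `Θ[ε + a] Θ[ε]`, and squaring once more gives the `P_k`.
-/

section HigherGenus

open Matrix

variable {ι : Type*} [Fintype ι]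

lemma summable_exp_neg_quadratic {c : ℝ} (hc : 0 < c) (a s : ℝ) :
    Summable fun n : ℤ ↦ Real.exp (-Real.pi * (c * (n + a / 2) ^ 2 + (n + a / 2) * s)) := by
  have h := ((summable_jacobiTheta₂_term_iff (((c * a + s) / 2 : ℝ) * Complex.I)
    (c * Complex.I)).2 (by simpa using hc)).norm.mul_left
      (Real.exp (-Real.pi * (c * (a / 2) ^ 2 + a / 2 * s)))
  refine h.congr fun n ↦ ?_
  rw [norm_jacobiTheta₂_term, ← Real.exp_add]
  congr 1
  simp only [Complex.mul_I_im, Complex.ofReal_re]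
  ring

lemma summable_fintype_prod_of_nonneg {κ : ι → Type*} {f : ∀ i, κ i → ℝ}
    (hf₀ : ∀ i k, 0 ≤ f i k) (hf : ∀ i, Summable (f i)) :
    Summable fun x : ∀ i, κ i ↦ ∏ i, f i (x i) := by
  classical
  refine summable_of_sum_le (c := ∏ i, ∑' k, f i k)
    (fun x ↦ Finset.prod_nonneg fun i _ ↦ hf₀ i (x i)) fun s ↦ ?_
  let t (i : ι) : Finset (κ i) := s.image fun x ↦ x i
  have hst : s ⊆ Fintype.piFinset t := fun x hx ↦
    Fintype.mem_piFinset.2 fun i ↦ Finset.mem_image_of_mem (fun x ↦ x i) hx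
  calc ∑ x ∈ s, ∏ i, f i (x i)
      ≤ ∑ x ∈ Fintype.piFinset t, ∏ i, f i (x i) :=
        Finset.sum_le_sum_of_subset_of_nonneg hst fun x _ _ ↦
          Finset.prod_nonneg fun i _ ↦ hf₀ i (x i)
    _ = ∏ i, ∑ k ∈ t i, f i k := (Finset.prod_univ_sum t f).symm
    _ ≤ ∏ i, ∑' k, f i k :=
        Finset.prod_le_prod (fun i _ ↦ Finset.sum_nonneg fun k _ ↦ hf₀ i k) fun i _ ↦
          (hf i).sum_le_tsum (t i) fun k _ ↦ hf₀ i k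

open scoped MatrixOrder in
lemma exists_pos_mul_dotProduct_self_le_of_posDef {M : Matrix ι ι ℝ} (hM : M.PosDef) :
    ∃ c > 0, ∀ x : ι → ℝ, c * (x ⬝ᵥ x) ≤ x ⬝ᵥ M *ᵥ x := by
  classical
  obtain ⟨c, hc, hcM⟩ := Pi.exists_forall_pos_add_lt hM.eigenvalues_pos
  have hle : algebraMap ℝ (Matrix ι ι ℝ) c ≤ M := by
    refine algebraMap_le_of_le_spectrum (fun {r} hr ↦ ?_) hM.isHermitian.isSelfAdjoint
    obtain ⟨i, rfl⟩ := hM.isHermitian.spectrum_real_eq_range_eigenvalues ▸ hr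
    simpa using (hcM i).le
  refine ⟨c, hc, fun x ↦ ?_⟩
  have hx := (Matrix.le_iff.1 hle).dotProduct_mulVec_nonneg x
  simpa [sub_mulVec, Algebra.algebraMap_eq_smul_one, smul_mulVec] using hx

/-- The exponential `exp(πi (xᵀ τ x + x·b))`, whose sum over a shifted lattice is a theta constant.
It is a function of an arbitrary vector `x`, so that lattice points can be combined linearly. -/
noncomputable def thetaSummand (τ : Matrix ι ι ℂ) (b x : ι → ℂ) : ℂ :=
  Complex.exp (Real.pi * Complex.I * (x ⬝ᵥ τ *ᵥ x + x ⬝ᵥ b))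

/-- The theta constant `θ[a;b](τ)` in genus `g = |ι|`, with the characteristic `a` doubled as in
`theta`. A complex `b` is allowed, so that `b = 2z` gives the theta function of `z`. -/
noncomputable def thetaConst (a : ι → ℝ) (b : ι → ℂ) (τ : Matrix ι ι ℂ) : ℂ :=
  ∑' n : ι → ℤ, thetaSummand τ b fun i ↦ n i + a i / 2

lemma norm_thetaSummand_ofReal (τ : Matrix ι ι ℂ) (b : ι → ℂ) (x : ι → ℝ) :
    ‖thetaSummand τ b fun i ↦ x i‖ =
      Real.exp (-Real.pi * (x ⬝ᵥ τ.map Complex.im *ᵥ x + ∑ i, x i * (b i).im)) := by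
  rw [thetaSummand, Complex.norm_exp]
  simp [dotProduct, mulVec, Complex.mul_re]

lemma summable_norm_thetaSummand {τ : Matrix ι ι ℂ} (hτ : (τ.map Complex.im).PosDef)
    (a : ι → ℝ) (b : ι → ℂ) :
    Summable fun n : ι → ℤ ↦ ‖thetaSummand τ b fun i ↦ n i + a i / 2‖ := by
  obtain ⟨c, hc, hcτ⟩ := exists_pos_mul_dotProduct_self_le_of_posDef hτ
  refine .of_nonneg_of_le (fun _ ↦ norm_nonneg _) (fun n ↦ ?_)
    (summable_fintype_prod_of_nonneg (fun _ _ ↦ (Real.exp_pos _).le)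
      fun i ↦ summable_exp_neg_quadratic hc (a i) (b i).im)
  let x (i : ι) : ℝ := n i + a i / 2
  have hx : (fun i ↦ (n i : ℂ) + a i / 2) = fun i ↦ (x i : ℂ) := by ext i; simp [x]
  rw [hx, norm_thetaSummand_ofReal, ← Real.exp_sum, ← Finset.mul_sum, Finset.sum_add_distrib,
    ← Finset.mul_sum, Real.exp_le_exp]
  have hxx : x ⬝ᵥ x = ∑ i, x i ^ 2 := by simp [dotProduct, sq]
  have := hxx ▸ hcτ x
  exact mul_le_mul_of_nonpos_left (by gcongr) (neg_nonpos.2 Real.pi_pos.le)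

lemma thetaSummand_add_mul_thetaSummand_sub (τ : Matrix ι ι ℂ) (b b' x y : ι → ℂ) :
    thetaSummand τ b (x + y) * thetaSummand τ b' (x - y) =
      thetaSummand ((2 : ℂ) • τ) (b + b') x * thetaSummand ((2 : ℂ) • τ) (b - b') y := by
  simp only [thetaSummand, ← Complex.exp_add]
  congr 1
  simp only [mulVec_add, mulVec_sub, smul_mulVec, dotProduct_add, dotProduct_sub, add_dotProduct,
    sub_dotProduct, dotProduct_smul, smul_eq_mul]
  ring

/-- The reindexing `(ε, p, q) ↦ (p + q + ε, p - q)` of pairs of lattice points, where `ε` is the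
parity of their difference. -/
def parityEquiv (ι : Type*) : (ι → Fin 2) × (ι → ℤ) × (ι → ℤ) ≃ (ι → ℤ) × (ι → ℤ) where
  toFun w := (fun i ↦ w.2.1 i + w.2.2 i + (w.1 i : ℕ), fun i ↦ w.2.1 i - w.2.2 i)
  invFun v := (fun i ↦ (Int.divModEquiv 2 (v.1 i - v.2 i)).2,
    fun i ↦ v.2 i + (v.1 i - v.2 i) / 2, fun i ↦ (v.1 i - v.2 i) / 2)
  left_inv w := by
    ext i <;> simp [Int.natMod] <;> omega
  right_inv v := by
    ext i
    · simp [Int.natMod]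
      omega
    · simp

lemma thetaSummand_mul_thetaSummand_parityEquiv (τ : Matrix ι ι ℂ) (c d : ι → ℝ) (b b' : ι → ℂ)
    (ε : ι → Fin 2) (p q : ι → ℤ) :
    thetaSummand τ b (fun i ↦ (parityEquiv ι (ε, p, q)).1 i + ((c + d) i : ℝ) / 2) *
        thetaSummand τ b' (fun i ↦ (parityEquiv ι (ε, p, q)).2 i + ((c - d) i : ℝ) / 2) =
      thetaSummand ((2 : ℂ) • τ) (b + b') (fun i ↦ p i + ((ε i : ℕ) + c i : ℝ) / 2) *
        thetaSummand ((2 : ℂ) • τ) (b - b') (fun i ↦ q i + ((ε i : ℕ) + d i : ℝ) / 2) := by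
  rw [← thetaSummand_add_mul_thetaSummand_sub]
  congr 2 <;> funext i <;> simp [parityEquiv] <;> ring

theorem thetaConst_mul_thetaConst [DecidableEq ι] {τ : Matrix ι ι ℂ}
    (hτ : (τ.map Complex.im).PosDef) (c d : ι → ℝ) (b b' : ι → ℂ) :
    thetaConst (c + d) b τ * thetaConst (c - d) b' τ =
      ∑ ε : ι → Fin 2, thetaConst (fun i ↦ (ε i : ℕ) + c i) (b + b') ((2 : ℂ) • τ) *
        thetaConst (fun i ↦ (ε i : ℕ) + d i) (b - b') ((2 : ℂ) • τ) := by
  have hτ₂ : (((2 : ℂ) • τ).map Complex.im).PosDef := by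
    have h : ((2 : ℂ) • τ).map Complex.im = (2 : ℝ) • τ.map Complex.im := by ext; simp
    exact h ▸ hτ.smul two_pos
  have hs := summable_norm_thetaSummand hτ (c + d) b
  have hs' := summable_norm_thetaSummand hτ (c - d) b'
  have hsum := (parityEquiv ι).summable_iff.2 (summable_mul_of_summable_norm hs hs')
  rw [thetaConst, thetaConst, tsum_mul_tsum_of_summable_norm hs hs', ← (parityEquiv ι).tsum_eq]
  refine hsum.tsum_prod.trans ?_
  rw [tsum_fintype]
  refine Finset.sum_congr rfl fun ε _ ↦ ?_
  rw [thetaConst, thetaConst, tsum_mul_tsum_of_summable_norm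
    (summable_norm_thetaSummand hτ₂ _ _) (summable_norm_thetaSummand hτ₂ _ _)]
  exact tsum_congr fun w ↦
    thetaSummand_mul_thetaSummand_parityEquiv τ c d b b' ε w.1 w.2

lemma thetaConst_add_two_mul_left (a : ι → ℝ) (k : ι → ℤ) (b : ι → ℂ) (τ : Matrix ι ι ℂ) :
    thetaConst (fun i ↦ a i + 2 * k i) b τ = thetaConst a b τ := by
  refine Eq.trans (tsum_congr fun n ↦ ?_) ((Equiv.addRight k).tsum_eq _)
  congr 1
  ext i
  simp only [Equiv.coe_addRight, Pi.add_apply]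
  push_cast
  ring

lemma thetaConst_add_two_mul_right (a k : ι → ℤ) (b : ι → ℂ) (τ : Matrix ι ι ℂ) :
    thetaConst (fun i ↦ a i) (fun i ↦ b i + 2 * k i) τ =
      (-1) ^ (a ⬝ᵥ k) * thetaConst (fun i ↦ a i) b τ := by
  rw [thetaConst, thetaConst, ← tsum_mul_left]
  refine tsum_congr fun n ↦ ?_
  have hphase : (fun i ↦ n i + (a i : ℝ) / 2 : ι → ℂ) ⬝ᵥ (fun i ↦ b i + 2 * k i) =
      (a ⬝ᵥ k : ℤ) + (fun i ↦ n i + (a i : ℝ) / 2 : ι → ℂ) ⬝ᵥ b + (n ⬝ᵥ k : ℤ) * 2 := by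
    simp only [dotProduct, Int.cast_sum, Finset.sum_mul, ← Finset.sum_add_distrib]
    refine Finset.sum_congr rfl fun i _ ↦ ?_
    push_cast
    ring
  rw [← Complex.exp_pi_mul_I, ← Complex.exp_int_mul, thetaSummand, thetaSummand, ← Complex.exp_add,
    Complex.exp_eq_exp_iff_exists_int, hphase]
  exact ⟨n ⬝ᵥ k, by ring⟩

theorem thetaConst_intCast_sq [DecidableEq ι] {τ : Matrix ι ι ℂ} (hτ : (τ.map Complex.im).PosDef)
    (a b : ι → ℤ) :
    thetaConst (fun i ↦ a i) (fun i ↦ b i) τ ^ 2 =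
      ∑ ε : ι → Fin 2, (-1) ^ ((fun i ↦ (ε i : ℕ) + a i) ⬝ᵥ b) *
        (thetaConst (fun i ↦ ((ε i : ℕ) + a i : ℤ)) 0 ((2 : ℂ) • τ) *
          thetaConst (fun i ↦ (ε i : ℕ)) 0 ((2 : ℂ) • τ)) := by
  have hmul := thetaConst_mul_thetaConst hτ (fun i ↦ a i) 0 (fun i ↦ b i) (fun i ↦ b i)
  simp only [add_zero, sub_zero, sub_self, Pi.zero_apply, ← sq] at hmul
  rw [hmul]
  refine Finset.sum_congr rfl fun ε _ ↦ ?_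
  have hb : ((fun i ↦ (b i : ℂ)) + fun i ↦ (b i : ℂ)) = fun i ↦ (0 : ι → ℂ) i + 2 * b i := by
    ext i
    simp [two_mul]
  have := thetaConst_add_two_mul_right (fun i ↦ (ε i : ℕ) + a i) b 0 ((2 : ℂ) • τ)
  rw [← mul_assoc, ← this, hb]
  simp

end HigherGenus

lemma theta_eq_thetaConst (κ : Char) (τ : Mat2) :
    theta κ τ = thetaConst (fun i ↦ κ.1 i) (fun i ↦ κ.2 i) τ := by
  simp only [theta, thetaConst, thetaSummand, dotProduct, Matrix.mulVec, Finset.mul_sum, mul_assoc,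
    Complex.ofReal_intCast]

lemma Θf_eq_thetaConst (ε : Fin 2 → ℤ) (τ : Mat2) :
    Θf ε τ = thetaConst (fun i ↦ ε i) 0 ((2 : ℂ) • τ) := by
  rw [Θf, theta_eq_thetaConst]
  congr 1
  ext i
  fin_cases i <;> simp

lemma Θf_add_two_mul (ε k : Fin 2 → ℤ) (τ : Mat2) : Θf (fun i ↦ ε i + 2 * k i) τ = Θf ε τ := by
  simpa [Θf_eq_thetaConst] using
    thetaConst_add_two_mul_left (fun i ↦ (ε i : ℝ)) k 0 ((2 : ℂ) • τ)

lemma Θf_two_left (a : ℤ) (τ : Mat2) : Θf ![2, a] τ = Θf ![0, a] τ := by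
  rw [← Θf_add_two_mul ![0, a] ![1, 0]]
  congr
  ext i
  fin_cases i <;> simp

lemma Θf_two_right (a : ℤ) (τ : Mat2) : Θf ![a, 2] τ = Θf ![a, 0] τ := by
  rw [← Θf_add_two_mul ![a, 0] ![0, 1]]
  congr
  ext i
  fin_cases i <;> simp

theorem theta_sq {τ : Mat2} (hτ : (τ.map Complex.im).PosDef) (κ : Char) :
    theta κ τ ^ 2 = ∑ ε : Fin 2 → Fin 2, (-1) ^ (∑ i, ((ε i : ℕ) + κ.1 i) * κ.2 i) *
      (Θf (fun i ↦ (ε i : ℕ) + κ.1 i) τ * Θf (fun i ↦ (ε i : ℕ)) τ) := by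
  simpa only [theta_eq_thetaConst, Θf_eq_thetaConst] using! thetaConst_intCast_sq hτ κ.1 κ.2

lemma theta_sq_eq_four_terms {τ : Mat2} (hτ : (τ.map Complex.im).PosDef) (a₁ a₂ b₁ b₂ : ℤ) :
    theta (![a₁, a₂], ![b₁, b₂]) τ ^ 2 =
      (-1) ^ (a₁ * b₁ + a₂ * b₂) * (Θf ![a₁, a₂] τ * Θf ![0, 0] τ) +
      (-1) ^ (a₁ * b₁ + (1 + a₂) * b₂) * (Θf ![a₁, 1 + a₂] τ * Θf ![0, 1] τ) +
      (-1) ^ ((1 + a₁) * b₁ + a₂ * b₂) * (Θf ![1 + a₁, a₂] τ * Θf ![1, 0] τ) +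
      (-1) ^ ((1 + a₁) * b₁ + (1 + a₂) * b₂) * (Θf ![1 + a₁, 1 + a₂] τ * Θf ![1, 1] τ) := by
  have hfun (f : Fin 2 → ℤ) : Θf f τ = Θf ![f 0, f 1] τ := by
    congr 1
    ext i
    fin_cases i <;> rfl
  rw [theta_sq hτ, ← (finTwoArrowEquiv _).symm.sum_comp]
  simp [Fintype.sum_prod_type, Fin.sum_univ_two, hfun (fun _ ↦ _), add_assoc]

lemma theta_δev_sq {τ : Mat2} (hτ : (τ.map Complex.im).PosDef) :
    theta (δev 0) τ ^ 2 =
      Θf ![0, 0] τ ^ 2 + Θf ![0, 1] τ ^ 2 + Θf ![1, 0] τ ^ 2 + Θf ![1, 1] τ ^ 2 ∧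
    theta (δev 1) τ ^ 2 =
      Θf ![0, 0] τ ^ 2 - Θf ![0, 1] τ ^ 2 + Θf ![1, 0] τ ^ 2 - Θf ![1, 1] τ ^ 2 ∧
    theta (δev 2) τ ^ 2 =
      Θf ![0, 0] τ ^ 2 + Θf ![0, 1] τ ^ 2 - Θf ![1, 0] τ ^ 2 - Θf ![1, 1] τ ^ 2 ∧
    theta (δev 3) τ ^ 2 =
      Θf ![0, 0] τ ^ 2 - Θf ![0, 1] τ ^ 2 - Θf ![1, 0] τ ^ 2 + Θf ![1, 1] τ ^ 2 ∧
    theta (δev 4) τ ^ 2 = 2 * (Θf ![0, 0] τ * Θf ![0, 1] τ + Θf ![1, 0] τ * Θf ![1, 1] τ) ∧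
    theta (δev 5) τ ^ 2 = 2 * (Θf ![0, 0] τ * Θf ![0, 1] τ - Θf ![1, 0] τ * Θf ![1, 1] τ) ∧
    theta (δev 6) τ ^ 2 = 2 * (Θf ![0, 0] τ * Θf ![1, 0] τ + Θf ![0, 1] τ * Θf ![1, 1] τ) ∧
    theta (δev 7) τ ^ 2 = 2 * (Θf ![0, 0] τ * Θf ![1, 0] τ - Θf ![0, 1] τ * Θf ![1, 1] τ) ∧
    theta (δev 8) τ ^ 2 = 2 * (Θf ![0, 0] τ * Θf ![1, 1] τ + Θf ![0, 1] τ * Θf ![1, 0] τ) ∧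
    theta (δev 9) τ ^ 2 = 2 * (Θf ![0, 0] τ * Θf ![1, 1] τ - Θf ![0, 1] τ * Θf ![1, 0] τ) := by
  refine ⟨?_, ?_, ?_, ?_, ?_, ?_, ?_, ?_, ?_, ?_⟩ <;>
  · simp only [δev, Matrix.cons_val, theta_sq_eq_four_terms hτ, mul_zero, mul_one, add_zero,
      zero_add, zpow_ofNat, Int.reduceAdd, Θf_two_left, Θf_two_right]
    ring

theorem statement0_general {τ : Mat2} (hτ : (τ.map Complex.im).PosDef) :
    theta (δev 0) τ ^ 4 = P0 τ + P1 τ + P2 τ + P3 τ ∧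
    theta (δev 1) τ ^ 4 = P0 τ - P1 τ + P2 τ - P3 τ ∧
    theta (δev 2) τ ^ 4 = P0 τ + P1 τ - P2 τ - P3 τ ∧
    theta (δev 3) τ ^ 4 = P0 τ - P1 τ - P2 τ + P3 τ ∧
    theta (δev 4) τ ^ 4 = 2 * P1 τ + 2 * P4 τ ∧
    theta (δev 5) τ ^ 4 = 2 * P1 τ - 2 * P4 τ ∧
    theta (δev 6) τ ^ 4 = 2 * P2 τ + 2 * P4 τ ∧
    theta (δev 7) τ ^ 4 = 2 * P2 τ - 2 * P4 τ ∧
    theta (δev 8) τ ^ 4 = 2 * P3 τ + 2 * P4 τ ∧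
    theta (δev 9) τ ^ 4 = 2 * P3 τ - 2 * P4 τ := by
  obtain ⟨h₀, h₁, h₂, h₃, h₄, h₅, h₆, h₇, h₈, h₉⟩ := theta_δev_sq hτ
  have hpow (κ : Char) : theta κ τ ^ 4 = (theta κ τ ^ 2) ^ 2 := by ring
  simp only [hpow, h₀, h₁, h₂, h₃, h₄, h₅, h₆, h₇, h₈, h₉, P0, P1, P2, P3, P4]
  refine ⟨?_, ?_, ?_, ?_, ?_, ?_, ?_, ?_, ?_, ?_⟩ <;> ring

/-- expansion of the ten `θ⁴[δ]` on the basis `P₀,…,P₄`. -/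
theorem statement0 : ∀ τ ∈ SiegelH2,
    theta (δev 0) τ ^ 4 = P0 τ + P1 τ + P2 τ + P3 τ ∧
    theta (δev 1) τ ^ 4 = P0 τ - P1 τ + P2 τ - P3 τ ∧
    theta (δev 2) τ ^ 4 = P0 τ + P1 τ - P2 τ - P3 τ ∧
    theta (δev 3) τ ^ 4 = P0 τ - P1 τ - P2 τ + P3 τ ∧
    theta (δev 4) τ ^ 4 = 2 * P1 τ + 2 * P4 τ ∧
    theta (δev 5) τ ^ 4 = 2 * P1 τ - 2 * P4 τ ∧
    theta (δev 6) τ ^ 4 = 2 * P2 τ + 2 * P4 τ ∧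
    theta (δev 7) τ ^ 4 = 2 * P2 τ - 2 * P4 τ ∧
    theta (δev 8) τ ^ 4 = 2 * P3 τ + 2 * P4 τ ∧
    theta (δev 9) τ ^ 4 = 2 * P3 τ - 2 * P4 τ :=
  fun _ hτ ↦ statement0_general hτ.2

end TwoLoop
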